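/- arXiv:1706.06911 — 8 statements merged into one kernel-verified Lean document; each statement's English description precedes it below -/
import Mathlib

section
/- Let T ⊆ {1,…,r}. The reduction digraph G(T) satisfies condition (a) — i.e., every state vertex x_j (1 ≤ j ≤ N+1) lies in the same strongly connected component of G(T) as both vertices y_i and u_1 for some i ∈ T — if and only if ⋃_{i∈T} S_i = {1,…,N}. -/
/-- Vertices of the reduction digraph: states `x_1,…,x_{N+1}`, the single input `u_1`,
and outputs `y_1,…,y_r`. -/
abbrev RVert (N r : ℕ) : Type := Fin (N + 1) ⊕ Unit ⊕ Fin r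

/-- State vertex. -/
def rX {N r : ℕ} (j : Fin (N + 1)) : RVert N r := Sum.inl j

/-- The input vertex `u_1`. -/
def rU {N r : ℕ} : RVert N r := Sum.inr (Sum.inl ())

/-- Output vertex `y_i`. -/
def rY {N r : ℕ} (i : Fin r) : RVert N r := Sum.inr (Sum.inr i)

/-- Edge relation of the reduction digraph `G(T)`: self-loops on every state,
`x_{N+1} → x_j` for `j ≤ N`, `u_1 → x_{N+1}`, `x_j → y_i` whenever `j ∈ S i`,
and `y_i → u_1` whenever `i ∈ T`. -/
def redEdge {N r : ℕ} (S : Fin r → Finset (Fin N)) (T : Finset (Fin r)) :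
    RVert N r → RVert N r → Prop
  | Sum.inl a, Sum.inl c => a = c ∨ (a = Fin.last N ∧ c ≠ Fin.last N)
  | Sum.inr (Sum.inl _), Sum.inl c => c = Fin.last N
  | Sum.inl a, Sum.inr (Sum.inr i) => ∃ j : Fin N, Fin.castSucc j = a ∧ j ∈ S i
  | Sum.inr (Sum.inr i), Sum.inr (Sum.inl _) => i ∈ T
  | _, _ => False

/-- Two vertices lie in the same strongly connected component: each is reachable
from the other (reachability is the reflexive–transitive closure of the edges). -/
def sameSCC {α : Type*} (E : α → α → Prop) (a b : α) : Prop :=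
  Relation.ReflTransGen E a b ∧ Relation.ReflTransGen E b a

/-- `T` satisfies condition (a): every state vertex `x_j` lies in the same SCC of
`G(T)` as both `y_i` and `u_1` for some `i ∈ T`. -/
def redCondA {N r : ℕ} (S : Fin r → Finset (Fin N)) (T : Finset (Fin r)) : Prop :=
  ∀ a : Fin (N + 1), ∃ i ∈ T,
    sameSCC (redEdge S T) (rX a) (rY i) ∧ sameSCC (redEdge S T) (rX a) rU

/-!
The input `u_1` reaches every state through `x_{N+1}`, and the only edges into `u_1` come from the
`y_i` with `i ∈ T`. Condition (a) therefore just says that every state reaches `u_1`. Up to its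
self-loop, `x_j` with `j ≤ N` has only the edges to the `y_i` with `j ∈ S_i`, so it reaches `u_1`
exactly when such an `i` lies in `T`; and `x_{N+1}` reaches `u_1` as soon as some `x_j` does.
-/

section Reduction

open Relation

variable {N r : ℕ} {S : Fin r → Finset (Fin N)} {T : Finset (Fin r)}

theorem redEdge_rX_castSucc_iff {x : Fin N} {v : RVert N r} :
    redEdge S T (rX x.castSucc) v ↔ v = rX x.castSucc ∨ ∃ i, x ∈ S i ∧ v = rY i := by
  rcases v with c | _ | i <;> simp [redEdge, rX, rY, eq_comm]

theorem redEdge_rX_last (a : Fin (N + 1)) : redEdge S T (rX (Fin.last N)) (rX a) := by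
  simp [redEdge, rX, eq_comm, em]

theorem redEdge_rU_rX_last : redEdge S T rU (rX (Fin.last N)) :=
  show Fin.last N = Fin.last N from rfl

theorem redEdge_rY_iff {i : Fin r} {v : RVert N r} :
    redEdge S T (rY i) v ↔ i ∈ T ∧ v = rU := by
  rcases v with _ | _ | _ <;> simp [redEdge, rY, rU]

theorem redEdge_to_rU_iff {v : RVert N r} :
    redEdge S T v rU ↔ ∃ i ∈ T, v = rY i := by
  rcases v with _ | _ | _ <;> simp [redEdge, rY, rU]

theorem reflTransGen_redEdge_rU_rX (a : Fin (N + 1)) :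
    ReflTransGen (redEdge S T) rU (rX a) :=
  .head redEdge_rU_rX_last (.single (redEdge_rX_last a))

theorem reflTransGen_redEdge_rY_rU_iff {i : Fin r} :
    ReflTransGen (redEdge S T) (rY i) rU ↔ i ∈ T := by
  refine ⟨fun h => ?_, fun hi => .single (redEdge_rY_iff.2 ⟨hi, rfl⟩)⟩
  obtain hYU | ⟨_, hedge, -⟩ := h.cases_head
  · simp [rY, rU] at hYU
  · exact (redEdge_rY_iff.1 hedge).1

theorem reflTransGen_redEdge_rX_castSucc_rU_iff {x : Fin N} :
    ReflTransGen (redEdge S T) (rX x.castSucc) rU ↔ ∃ i ∈ T, x ∈ S i := by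
  constructor
  · intro h
    generalize ha : (rX x.castSucc : RVert N r) = a at h
    induction h using ReflTransGen.head_induction_on with
    | refl => simp [rX, rU] at ha
    | head hedge hreach ih =>
      subst ha
      obtain rfl | ⟨i, hx, rfl⟩ := redEdge_rX_castSucc_iff.1 hedge
      · exact ih rfl
      · exact ⟨i, reflTransGen_redEdge_rY_rU_iff.1 hreach, hx⟩
  · rintro ⟨i, hi, hx⟩
    exact .head (redEdge_rX_castSucc_iff.2 (.inr ⟨i, hx, rfl⟩))
      (reflTransGen_redEdge_rY_rU_iff.2 hi)

theorem redCondA_iff_forall_reflTransGen_rU :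
    redCondA S T ↔ ∀ a, ReflTransGen (redEdge S T) (rX a) rU := by
  refine ⟨fun h a => ?_, fun h a => ?_⟩
  · obtain ⟨_, _, _, hXU, _⟩ := h a
    exact hXU
  · obtain hXU | ⟨_, hXY, hedge⟩ := (h a).cases_tail
    · simp [rX, rU] at hXU
    · obtain ⟨i, hi, rfl⟩ := redEdge_to_rU_iff.1 hedge
      have hUX := reflTransGen_redEdge_rU_rX (S := S) (T := T) a
      exact ⟨i, hi, ⟨hXY, .head hedge hUX⟩, h a, hUX⟩

theorem reduction_condA_iff_cover_general (hN : 1 ≤ N) (S : Fin r → Finset (Fin N))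
    (T : Finset (Fin r)) : redCondA S T ↔ ∀ x : Fin N, ∃ i ∈ T, x ∈ S i := by
  simp only [redCondA_iff_forall_reflTransGen_rU, Fin.forall_fin_succ',
    ← reflTransGen_redEdge_rX_castSucc_rU_iff]
  exact and_iff_left_of_imp fun h => .head (redEdge_rX_last _) (h ⟨0, hN⟩)

end Reduction

/-- `T` satisfies condition (a) in the reduction digraph `G(T)` if
and only if the sets `S_i`, `i ∈ T`, cover the universe `{1,…,N}`. -/
theorem reduction_condA_iff_cover {N r : ℕ} (hN : 1 ≤ N) (hr : 1 ≤ r)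
    (S : Fin r → Finset (Fin N)) (hcover : ∀ x : Fin N, ∃ i : Fin r, x ∈ S i)
    (w : Fin r → NNReal) (T : Finset (Fin r)) :
    redCondA S T ↔ ∀ x : Fin N, ∃ i ∈ T, x ∈ S i :=
  reduction_condA_iff_cover_general hN S T
end

section
/- Suppose the state digraph has a line condensation C_1,…,C_ℓ, and let K ⊆ {1,…,m}×{1,…,p} be a feedback set. A state vertex x ∈ C_k lies in the same strongly connected component of the closed-loop digraph as both endpoints y_j and u_i of some feedback edge with (i,j) ∈ K if and only if there exist (i,j) ∈ K and indices q ≤ k ≤ r such that some input edge goes from u_i to a state in C_q and some output edge goes from a state in C_r to y_j. -/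
/-- Vertices of a structured system: states `x_1,…,x_n`, inputs `u_1,…,u_m`,
outputs `y_1,…,y_p`. -/
abbrev SVert (n m p : ℕ) : Type := Fin n ⊕ Fin m ⊕ Fin p

/-- State vertex. -/
def stX {n m p : ℕ} (a : Fin n) : SVert n m p := Sum.inl a

/-- Input vertex. -/
def stU {n m p : ℕ} (i : Fin m) : SVert n m p := Sum.inr (Sum.inl i)

/-- Output vertex. -/
def stY {n m p : ℕ} (j : Fin p) : SVert n m p := Sum.inr (Sum.inr j)

/-- Edge relation of the closed-loop digraph: state edges (given by `A`), input
edges `u_i → x_c` (given by `B`), output edges `x_a → y_j` (given by `Co`), and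
feedback edges `y_j → u_i` for `(i, j) ∈ K`. -/
def closedEdge {n m p : ℕ} (A : Fin n → Fin n → Prop) (B : Fin m → Fin n → Prop)
    (Co : Fin n → Fin p → Prop) (K : Finset (Fin m × Fin p)) :
    SVert n m p → SVert n m p → Prop
  | Sum.inl a, Sum.inl c => A a c
  | Sum.inr (Sum.inl i), Sum.inl c => B i c
  | Sum.inl a, Sum.inr (Sum.inr j) => Co a j
  | Sum.inr (Sum.inr j), Sum.inr (Sum.inl i) => (i, j) ∈ K
  | _, _ => False

/-- Condition (a): every state vertex lies in the same SCC of the closed-loop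
digraph as both endpoints `u_i`, `y_j` of some feedback edge `(i, j) ∈ K`. -/
def condA {n m p : ℕ} (A : Fin n → Fin n → Prop) (B : Fin m → Fin n → Prop)
    (Co : Fin n → Fin p → Prop) (K : Finset (Fin m × Fin p)) : Prop :=
  ∀ a : Fin n, ∃ e ∈ K,
    sameSCC (closedEdge A B Co K) (stX a) (stU e.1) ∧
    sameSCC (closedEdge A B Co K) (stX a) (stY e.2)

/-- Condition (b): a collection of vertex-disjoint directed cycles of the
closed-loop digraph covers all state vertices.  Encoded as: there is a set `S`
of vertices containing all state vertices and a map `f` permuting `S` such that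
`v → f v` is an edge for every `v ∈ S` (the cycles of `f` are the cycle
collection). -/
def condB {n m p : ℕ} (A : Fin n → Fin n → Prop) (B : Fin m → Fin n → Prop)
    (Co : Fin n → Fin p → Prop) (K : Finset (Fin m × Fin p)) : Prop :=
  ∃ (S : Set (SVert n m p)) (f : SVert n m p → SVert n m p),
    Set.BijOn f S S ∧ (∀ a : Fin n, stX a ∈ S) ∧
    ∀ v ∈ S, closedEdge A B Co K v (f v)

/-- Cost of a feedback set under cost matrix `P`. -/
def fcost {m p : ℕ} (P : Fin m → Fin p → NNReal) (K : Finset (Fin m × Fin p)) : NNReal :=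
  ∑ e ∈ K, P e.1 e.2

/-- `C : Fin n → Fin ℓ` (assigning each state its class) is a line condensation
of the state digraph: classes are nonempty, each class induces a strongly
connected subgraph, every state edge stays in a class or goes from `C_k` to
`C_{k+1}`, and each consecutive pair of classes is linked by a state edge. -/
structure IsLineCondensation {n : ℕ} (A : Fin n → Fin n → Prop) (ℓ : ℕ)
    (C : Fin n → Fin ℓ) : Prop where
  nonempty : ∀ k : Fin ℓ, ∃ a : Fin n, C a = k
  strong : ∀ a c : Fin n, C a = C c →
    Relation.ReflTransGen (fun v w => A v w ∧ C v = C a ∧ C w = C a) a c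
  step : ∀ a c : Fin n, A a c → C c = C a ∨ (C c : ℕ) = (C a : ℕ) + 1
  linked : ∀ k : Fin ℓ, (k : ℕ) + 1 < ℓ →
    ∃ a c : Fin n, A a c ∧ C a = k ∧ (C c : ℕ) = (k : ℕ) + 1

/-- The feedback set `K` covers class `C_k`: some `(i, j) ∈ K` admits indices
`q ≤ k ≤ r` with an input edge from `u_i` into `C_q` and an output edge from
`C_r` to `y_j`. -/
def coversSCC {n m p ℓ : ℕ} (B : Fin m → Fin n → Prop) (Co : Fin n → Fin p → Prop)
    (C : Fin n → Fin ℓ) (K : Finset (Fin m × Fin p)) (k : Fin ℓ) : Prop :=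
  ∃ e ∈ K, ∃ q r : Fin ℓ, q ≤ k ∧ k ≤ r ∧
    (∃ s : Fin n, B e.1 s ∧ C s = q) ∧ (∃ s : Fin n, Co s e.2 ∧ C s = r)

/-!
The closed loop adds, on the level of states, a link `t → s` for every feedback edge `y_j → u_i`
fed by `t` and feeding `s`. Let `a` be comparable, for reachability in the state digraph, with every
state. If no link leads from a state downstream of `a` to a state upstream of `a`, then links
lead from downstream states to downstream states only, so they do not enlarge the set of
states reachable from `a`; dually they do not enlarge the set of states from which `a` is reachable.
Hence a closed walk through `a` and some link forces a link from downstream of `a` to upstream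
of `a`. In a line condensation, `a` reaches exactly the states of its own and all later classes, so
every state is comparable with every other one.
-/

open Relation

section Reachability

variable {α : Type*} {r l : α → α → Prop} {a b : α}

theorem reflTransGen_from_of_sup (ha : ∀ x, ReflTransGen r a x ∨ ReflTransGen r x a)
    (hl : ∀ t s, ReflTransGen r a t → l t s → ¬ReflTransGen r s a)
    (hab : ReflTransGen (r ⊔ l) a b) : ReflTransGen r a b := by
  induction hab with
  | refl => exact .refl
  | tail _ hxy ihx =>
    rcases hxy with hr | hlink
    · exact ihx.tail hr
    · exact (ha _).resolve_right (hl _ _ ihx hlink)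

theorem reflTransGen_to_of_sup (ha : ∀ x, ReflTransGen r a x ∨ ReflTransGen r x a)
    (hl : ∀ t s, ReflTransGen r a t → l t s → ¬ReflTransGen r s a)
    (hba : ReflTransGen (r ⊔ l) b a) : ReflTransGen r b a := by
  refine reflTransGen_swap.1 (reflTransGen_from_of_sup (l := Function.swap l)
    ?_ ?_ (reflTransGen_swap.2 hba))
  · simpa only [reflTransGen_swap, or_comm] using ha
  · simpa only [reflTransGen_swap] using fun s t hsa hts hat ↦ hl t s hat hts hsa

theorem exists_link_reflTransGen_sup_iff (ha : ∀ x, ReflTransGen r a x ∨ ReflTransGen r x a) :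
    (∃ t s, ReflTransGen (r ⊔ l) a t ∧ l t s ∧ ReflTransGen (r ⊔ l) s a) ↔
      ∃ t s, ReflTransGen r a t ∧ l t s ∧ ReflTransGen r s a := by
  have hr : ReflTransGen r ≤ ReflTransGen (r ⊔ l) := ReflTransGen.mono le_sup_left
  refine ⟨fun ⟨t, s, hat, hts, hsa⟩ ↦ ?_, fun ⟨t, s, hat, hts, hsa⟩ ↦
    ⟨t, s, hr _ _ hat, hts, hr _ _ hsa⟩⟩
  by_contra hnone
  have hl : ∀ t s, ReflTransGen r a t → l t s → ¬ReflTransGen r s a :=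
    fun t s hat hts hsa ↦ hnone ⟨t, s, hat, hts, hsa⟩
  exact hnone ⟨t, s, reflTransGen_from_of_sup ha hl hat, hts,
    reflTransGen_to_of_sup ha hl hsa⟩

end Reachability

section ClosedLoop

variable {n m p : ℕ} {A : Fin n → Fin n → Prop} {B : Fin m → Fin n → Prop}
  {Co : Fin n → Fin p → Prop} {K : Finset (Fin m × Fin p)}

/-- The links `t → s` between states that the feedback set `K` closes: `t` feeds the output and `s`
is fed by the input of some feedback edge, so that `t → y_j → u_i → s` is a walk in the closed
loop. The closed loop restricted to the states is `A ⊔ feedbackLink B Co K`. -/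
def feedbackLink (B : Fin m → Fin n → Prop) (Co : Fin n → Fin p → Prop)
    (K : Finset (Fin m × Fin p)) (t s : Fin n) : Prop :=
  ∃ e ∈ K, Co t e.2 ∧ B e.1 s

theorem reflTransGen_closedEdge_of_feedbackLink {t s : Fin n} (h : feedbackLink B Co K t s) :
    ReflTransGen (closedEdge A B Co K) (stX t) (stX s) := by
  obtain ⟨e, he, hte, hes⟩ := h
  have hty : closedEdge A B Co K (stX t) (stY e.2) := hte
  have hyu : closedEdge A B Co K (stY e.2) (stU e.1) := he
  have hus : closedEdge A B Co K (stU e.1) (stX s) := hes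
  exact .head hty (.head hyu (.single hus))

theorem reflTransGen_closedEdge_stX_stX_iff {a c : Fin n} :
    ReflTransGen (closedEdge A B Co K) (stX a) (stX c) ↔
      ReflTransGen (A ⊔ feedbackLink B Co K) a c := by
  constructor
  · let R := ReflTransGen (A ⊔ feedbackLink B Co K) a
    let FedOutput (j : Fin p) : Prop := ∃ t, R t ∧ Co t j
    let FedInput (i : Fin m) : Prop := ∃ j, FedOutput j ∧ (i, j) ∈ K
    suffices ∀ v, ReflTransGen (closedEdge A B Co K) (stX a) v →
        Sum.elim R (Sum.elim FedInput FedOutput) v from this (stX c)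
    intro v hv
    induction hv with
    | refl => exact ReflTransGen.refl
    | @tail v w _ hvw ih =>
      match v, w, hvw, ih with
      | .inl _, .inl _, hA, hx => exact hx.tail (.inl hA)
      | .inl x, .inr (.inr _), hCo, hx => exact ⟨x, hx, hCo⟩
      | .inr (.inr j), .inr (.inl _), hK, hj => exact ⟨j, hj, hK⟩
      | .inr (.inl i), .inl _, hB, ⟨j, ⟨t, ht, hCo⟩, hK⟩ =>
        exact ht.tail (.inr ⟨(i, j), hK, hCo, hB⟩)
  · refine ReflTransGen.lift' stX (fun x y hxy ↦ ?_) a c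
    rcases hxy with hA | hlink
    · exact ReflTransGen.single hA
    · exact reflTransGen_closedEdge_of_feedbackLink hlink

theorem reflTransGen_closedEdge_stX_stY_iff {a : Fin n} {j : Fin p} :
    ReflTransGen (closedEdge A B Co K) (stX a) (stY j) ↔
      ∃ t, ReflTransGen (A ⊔ feedbackLink B Co K) a t ∧ Co t j := by
  simp only [← reflTransGen_closedEdge_stX_stX_iff]
  refine ⟨fun h ↦ ?_, fun ⟨t, hat, htj⟩ ↦ hat.tail htj⟩
  obtain hj | ⟨v, hav, hvj⟩ := h.cases_tail
  · cases hj
  · match v, hvj with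
    | .inl t, htj => exact ⟨t, hav, htj⟩

theorem reflTransGen_closedEdge_stU_stX_iff {i : Fin m} {a : Fin n} :
    ReflTransGen (closedEdge A B Co K) (stU i) (stX a) ↔
      ∃ s, B i s ∧ ReflTransGen (A ⊔ feedbackLink B Co K) s a := by
  simp only [← reflTransGen_closedEdge_stX_stX_iff]
  refine ⟨fun h ↦ ?_, fun ⟨s, his, hsa⟩ ↦ .head (b := stX s) his hsa⟩
  obtain hi | ⟨v, hiv, hva⟩ := h.cases_head
  · cases hi
  · match v, hiv with
    | .inl s, his => exact ⟨s, his, hva⟩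

theorem sameSCC_stU_and_sameSCC_stY_iff {e : Fin m × Fin p} (he : e ∈ K) (v : SVert n m p) :
    (sameSCC (closedEdge A B Co K) v (stU e.1) ∧ sameSCC (closedEdge A B Co K) v (stY e.2)) ↔
      ReflTransGen (closedEdge A B Co K) v (stY e.2) ∧
        ReflTransGen (closedEdge A B Co K) (stU e.1) v := by
  have hyu : closedEdge A B Co K (stY e.2) (stU e.1) := he
  exact ⟨fun ⟨hu, hy⟩ ↦ ⟨hy.1, hu.2⟩, fun ⟨hvy, huv⟩ ↦ ⟨⟨hvy.tail hyu, huv⟩, hvy, huv.head hyu⟩⟩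

theorem exists_sameSCC_feedback_iff {a : Fin n} :
    (∃ e ∈ K, sameSCC (closedEdge A B Co K) (stX a) (stU e.1) ∧
        sameSCC (closedEdge A B Co K) (stX a) (stY e.2)) ↔
      ∃ t s, ReflTransGen (A ⊔ feedbackLink B Co K) a t ∧ feedbackLink B Co K t s ∧
        ReflTransGen (A ⊔ feedbackLink B Co K) s a := by
  constructor
  · rintro ⟨e, he, hscc⟩
    obtain ⟨hay, hua⟩ := (sameSCC_stU_and_sameSCC_stY_iff he _).1 hscc
    obtain ⟨t, hat, hty⟩ := reflTransGen_closedEdge_stX_stY_iff.1 hay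
    obtain ⟨s, hus, hsa⟩ := reflTransGen_closedEdge_stU_stX_iff.1 hua
    exact ⟨t, s, hat, ⟨e, he, hty, hus⟩, hsa⟩
  · rintro ⟨t, s, hat, ⟨e, he, hty, hus⟩, hsa⟩
    exact ⟨e, he, (sameSCC_stU_and_sameSCC_stY_iff he _).2
      ⟨reflTransGen_closedEdge_stX_stY_iff.2 ⟨t, hat, hty⟩,
        reflTransGen_closedEdge_stU_stX_iff.2 ⟨s, hus, hsa⟩⟩⟩

theorem coversSCC_iff_exists_feedbackLink {ℓ : ℕ} {C : Fin n → Fin ℓ} {k : Fin ℓ} :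
    coversSCC B Co C K k ↔ ∃ t s, k ≤ C t ∧ feedbackLink B Co K t s ∧ C s ≤ k := by
  constructor
  · rintro ⟨e, he, _, _, hsk, hkt, ⟨s, hus, rfl⟩, ⟨t, hty, rfl⟩⟩
    exact ⟨t, s, hkt, ⟨e, he, hty, hus⟩, hsk⟩
  · rintro ⟨t, s, hkt, ⟨e, he, hty, hus⟩, hsk⟩
    exact ⟨e, he, C s, C t, hsk, hkt, ⟨s, hus, rfl⟩, ⟨t, hty, rfl⟩⟩

end ClosedLoop

namespace IsLineCondensation

variable {n ℓ : ℕ} {A : Fin n → Fin n → Prop} {C : Fin n → Fin ℓ} {a c : Fin n}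

theorem le_of_edge (h : IsLineCondensation A ℓ C) (hac : A a c) : C a ≤ C c := by
  rcases h.step a c hac with heq | hsucc
  · exact heq.ge
  · exact Fin.le_def.2 (by lia)

theorem le_of_reflTransGen (h : IsLineCondensation A ℓ C) (hac : ReflTransGen A a c) :
    C a ≤ C c := by
  induction hac with
  | refl => exact le_rfl
  | tail _ hxy ih => exact ih.trans (h.le_of_edge hxy)

theorem reflTransGen_of_eq (h : IsLineCondensation A ℓ C) (hac : C a = C c) :
    ReflTransGen A a c :=
  ReflTransGen.mono (fun _ _ hxy ↦ hxy.1) _ _ (h.strong a c hac)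

theorem reflTransGen_of_le (h : IsLineCondensation A ℓ C) (hac : C a ≤ C c) :
    ReflTransGen A a c := by
  obtain ⟨d, hd⟩ := Nat.exists_eq_add_of_le (Fin.le_def.1 hac)
  clear hac
  induction d generalizing a with
  | zero => exact h.reflTransGen_of_eq (Fin.ext hd.symm)
  | succ d ih =>
    obtain ⟨s, t, hst, hs, ht⟩ := h.linked (C a) (by lia)
    exact ((h.reflTransGen_of_eq hs.symm).tail hst).trans (ih (by lia))

theorem reflTransGen_iff_le (h : IsLineCondensation A ℓ C) :
    ReflTransGen A a c ↔ C a ≤ C c :=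
  ⟨h.le_of_reflTransGen, h.reflTransGen_of_le⟩

end IsLineCondensation

theorem line_state_in_feedback_scc_iff_general {n m p : ℕ} (A : Fin n → Fin n → Prop)
    (B : Fin m → Fin n → Prop) (Co : Fin n → Fin p → Prop) (K : Finset (Fin m × Fin p))
    (a : Fin n) (ha : ∀ x, ReflTransGen A a x ∨ ReflTransGen A x a) :
    (∃ e ∈ K, sameSCC (closedEdge A B Co K) (stX a) (stU e.1) ∧
        sameSCC (closedEdge A B Co K) (stX a) (stY e.2)) ↔
      ∃ t s, ReflTransGen A a t ∧ feedbackLink B Co K t s ∧ ReflTransGen A s a :=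
  exists_sameSCC_feedback_iff.trans (exists_link_reflTransGen_sup_iff ha)

/-- under a line condensation, a state `a ∈ C_k` lies in the same
SCC of the closed-loop digraph as both endpoints of some feedback edge of `K`
iff some `(i, j) ∈ K` has an input edge into some `C_q` and an output edge from
some `C_r` with `q ≤ k ≤ r`. -/
theorem line_state_in_feedback_scc_iff {n m p ℓ : ℕ}
    (A : Fin n → Fin n → Prop) (B : Fin m → Fin n → Prop) (Co : Fin n → Fin p → Prop)
    (C : Fin n → Fin ℓ) (h : IsLineCondensation A ℓ C)
    (K : Finset (Fin m × Fin p)) (a : Fin n) :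
    (∃ e ∈ K, sameSCC (closedEdge A B Co K) (stX a) (stU e.1) ∧
        sameSCC (closedEdge A B Co K) (stX a) (stY e.2)) ↔
      coversSCC B Co C K (C a) := by
  have ha : ∀ x, ReflTransGen A a x ∨ ReflTransGen A x a := fun x ↦
    (le_total (C a) (C x)).imp h.reflTransGen_of_le h.reflTransGen_of_le
  simpa only [coversSCC_iff_exists_feedbackLink, h.reflTransGen_iff_le] using
    line_state_in_feedback_scc_iff_general A B Co K a ha
end

section
/- Suppose the state digraph has a line condensation C_1,…,C_ℓ and there is a permutation σ of the state vertices such that x → σ(x) is a state edge for every state vertex x. Let P ∈ ℝ_{≥0}^{m×p} and let K* minimize P(K) = Σ_{(i,j)∈K} P_{ij} among all feedback sets K satisfying conditions (a) and (b). Then for every k ∈ {1,…,ℓ} there exist (i,j) ∈ K* and indices q ≤ k ≤ r such that some input edge goes from u_i to a state in C_q and some output edge goes from a state in C_r to y_j (i.e., K* contains an edge of the set A_k of feedback edges that can cover C_k). -/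
/-!
On a closed walk through a state `x` and an input, the class never decreases along state edges, so
the walk can return to `x` only by passing from a class `≥ C x` to a class `≤ C x` along a single
output-feedback-input passage, and the feedback edge of that passage covers `C x`.
-/

section CoveredLevels

variable {n m p : ℕ} {L : Type*} {A : Fin n → Fin n → Prop} {B : Fin m → Fin n → Prop}
  {Co : Fin n → Fin p → Prop} {C : Fin n → L} {K : Finset (Fin m × Fin p)} {k : L} {T : Set L}

/-- The feedback set `K` covers the level `k` of a potential `C` on the states: some feedback edge
of `K` can be entered from a state at or above `k` and left to a state at or below `k`. For a line
condensation, where the potential is the class, this is `coversSCC`. -/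
def CoversLevel [LE L] (B : Fin m → Fin n → Prop) (Co : Fin n → Fin p → Prop) (C : Fin n → L)
    (K : Finset (Fin m × Fin p)) (k : L) : Prop :=
  ∃ e ∈ K, (∃ s, B e.1 s ∧ C s ≤ k) ∧ ∃ t, Co t e.2 ∧ k ≤ C t

/-- The region of the closed-loop digraph above the level `k`: outputs fed by some state at or above
`k`, inputs feeding only states strictly above `k`, and states with potential in `T`. The set `T` is
a parameter so that states at level `k` itself can be included (`T = Set.Ici k`) or excluded
(`T = Set.Ioi k`). -/
def IsAbove [Preorder L] (B : Fin m → Fin n → Prop) (Co : Fin n → Fin p → Prop) (C : Fin n → L)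
    (k : L) (T : Set L) : SVert n m p → Prop
  | Sum.inl x => C x ∈ T
  | Sum.inr (Sum.inl i) => ∀ s, B i s → k < C s
  | Sum.inr (Sum.inr j) => ∃ t, Co t j ∧ k ≤ C t

theorem CoversLevel.coversSCC {ℓ : ℕ} {C : Fin n → Fin ℓ} {k : Fin ℓ}
    (hk : CoversLevel B Co C K k) : coversSCC B Co C K k :=
  let ⟨e, he, ⟨s, hs, hsk⟩, t, ht, hkt⟩ := hk
  ⟨e, he, C s, C t, hsk, hkt, ⟨s, hs, rfl⟩, t, ht, rfl⟩

theorem IsLineCondensation.class_le_of_edge {ℓ : ℕ} {C : Fin n → Fin ℓ}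
    (h : IsLineCondensation A ℓ C) (a c : Fin n) (hac : A a c) : C a ≤ C c := by
  rcases h.step a c hac with hsame | hsucc
  · exact hsame.ge
  · exact Fin.le_def.mpr (by lia)

variable [LinearOrder L]

theorem IsAbove.of_closedEdge (hC : ∀ a c, A a c → C a ≤ C c) (hk : ¬ CoversLevel B Co C K k)
    (hT : IsUpperSet T) (hkT : Set.Ioi k ⊆ T) (hTk : T ⊆ Set.Ici k) {v w : SVert n m p}
    (hvw : closedEdge A B Co K v w) (hv : IsAbove B Co C k T v) : IsAbove B Co C k T w := by
  rcases v with x | i | j <;> rcases w with x' | i' | j'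
  case inl.inl => exact hT (hC x x' hvw) hv
  case inl.inr.inr => exact ⟨x, hvw, hTk hv⟩
  case inr.inl.inl => exact hkT (hv x' hvw)
  case inr.inr.inr.inl =>
    exact fun s hs => lt_of_not_ge fun hsk => hk ⟨(i', j), hvw, ⟨s, hs, hsk⟩, hv⟩
  all_goals exact hvw.elim

theorem IsAbove.of_reachable (hC : ∀ a c, A a c → C a ≤ C c) (hk : ¬ CoversLevel B Co C K k)
    (hT : IsUpperSet T) (hkT : Set.Ioi k ⊆ T) (hTk : T ⊆ Set.Ici k) {v w : SVert n m p}
    (hvw : Relation.ReflTransGen (closedEdge A B Co K) v w) (hv : IsAbove B Co C k T v) :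
    IsAbove B Co C k T w := by
  induction hvw with
  | refl => exact hv
  | tail _ hedge ih => exact ih.of_closedEdge hC hk hT hkT hTk hedge

theorem coversLevel_of_sameSCC_input (hC : ∀ a c, A a c → C a ≤ C c) {a : Fin n} {i : Fin m}
    (hai : sameSCC (closedEdge A B Co K) (stX a) (stU i)) : CoversLevel B Co C K (C a) := by
  by_contra hk
  have input_above : IsAbove B Co C (C a) (Set.Ici (C a)) (stU i) :=
    IsAbove.of_reachable hC hk (isUpperSet_Ici _) Set.Ioi_subset_Ici_self subset_rfl hai.1
      (Set.self_mem_Ici : C a ∈ Set.Ici (C a))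
  -- Membership of an input does not depend on `T`, so the way back can use the strict region.
  have state_above : IsAbove B Co C (C a) (Set.Ioi (C a)) (stX a) :=
    IsAbove.of_reachable hC hk (isUpperSet_Ioi _) subset_rfl Set.Ioi_subset_Ici_self hai.2
      input_above
  exact lt_irrefl (C a) state_above

theorem line_optimal_meets_every_Ak_general (hC : ∀ a c, A a c → C a ≤ C c)
    (hK : condA A B Co K) (a : Fin n) : CoversLevel B Co C K (C a) :=
  let ⟨_, _, hinput, _⟩ := hK a
  coversLevel_of_sameSCC_input hC hinput

end CoveredLevels

/-- under a line condensation and a perfect matching of the state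
bipartite graph (a permutation `σ` of the states with a state edge `x → σ x`
for every `x`), any minimum-cost feedback set `K*` satisfying conditions (a)
and (b) contains, for each class `C_k`, an edge of the set `A_k` of feedback
edges that can cover `C_k`. -/
theorem line_optimal_meets_every_Ak {n m p ℓ : ℕ}
    (A : Fin n → Fin n → Prop) (B : Fin m → Fin n → Prop) (Co : Fin n → Fin p → Prop)
    (C : Fin n → Fin ℓ) (h : IsLineCondensation A ℓ C)
    (σ : Equiv.Perm (Fin n)) (hσ : ∀ a : Fin n, A a (σ a))
    (P : Fin m → Fin p → NNReal) (Kstar : Finset (Fin m × Fin p))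
    (hfeas : condA A B Co Kstar ∧ condB A B Co Kstar)
    (hopt : ∀ K : Finset (Fin m × Fin p),
      condA A B Co K ∧ condB A B Co K → fcost P Kstar ≤ fcost P K) :
    ∀ k : Fin ℓ, coversSCC B Co C Kstar k := by
  intro k
  obtain ⟨a, rfl⟩ := h.nonempty k
  exact (line_optimal_meets_every_Ak_general h.class_le_of_edge hfeas.1 a).coversSCC
end

section
/- For every k with 0 ≤ k ≤ ℓ, the dynamic programming value satisfies W(k) = inf { Σ_{e∈F} w(e) : F ⊆ E and F covers {1,…,k} }. In particular W(ℓ) equals the minimum total weight of a subset of E whose intervals cover {1,…,ℓ}. -/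
open scoped ENNReal

/-!
Minimum cover weights satisfy the same recursion as `W`, so strong induction on `k` identifies the
two. Adding an interval `e ∋ k` to a cover of `{1, …, a e - 1}` gives a cover of `{1, …, k}`.
Conversely, every cover of `{1, …, k}` contains some `e ∋ k`, and deleting it leaves a cover of
`{1, …, a e - 1}`, as `e` contains no point below `a e`. Continuity of addition lets the weight of
`e` pass through the infimum over covers.
-/

/-- The intervals `[a e, b e]`, `e ∈ F`, cover `{1, …, k}`. The family `F` is a finite set, so that
its total weight is defined, but the index type `E` may be infinite. -/
def CoversUpTo {E : Type*} (a b : E → ℕ) (F : Finset E) (k : ℕ) : Prop :=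
  ∀ j : ℕ, 1 ≤ j → j ≤ k → ∃ e ∈ F, a e ≤ j ∧ j ≤ b e

/-- The infimum of the total weights of the finite families of intervals covering `{1, …, k}`;
it is `⊤` when there is no such family. -/
def minCoverWeight {E M : Type*} [AddCommMonoid M] [InfSet M] (a b : E → ℕ) (w : E → M) (k : ℕ) :
    M :=
  sInf {c : M | ∃ F : Finset E, CoversUpTo a b F k ∧ c = ∑ e ∈ F, w e}

section Covers

variable {E : Type*} {a b : E → ℕ} {F : Finset E} {e : E} {k m : ℕ}

theorem coversUpTo_zero : CoversUpTo a b F 0 := by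
  intro j hj hj0
  omega

variable [DecidableEq E]

theorem CoversUpTo.insert (hF : CoversUpTo a b F m) (hae : a e ≤ m + 1) (hke : k ≤ b e) :
    CoversUpTo a b (insert e F) k := by
  intro j hj hjk
  obtain hjm | hmj := le_or_gt j m
  · obtain ⟨f, hf, hjf⟩ := hF j hj hjm
    exact ⟨f, Finset.mem_insert_of_mem hf, hjf⟩
  · exact ⟨e, Finset.mem_insert_self e F, hae.trans hmj, hjk.trans hke⟩

theorem CoversUpTo.erase (hF : CoversUpTo a b F k) (hmk : m ≤ k) (hme : m < a e) :
    CoversUpTo a b (F.erase e) m := by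
  intro j hj hjm
  obtain ⟨f, hf, haf, hjf⟩ := hF j hj (hjm.trans hmk)
  have hfe : f ≠ e := by
    rintro rfl
    exact (haf.trans hjm).not_gt hme
  exact ⟨f, Finset.mem_erase.2 ⟨hfe, hf⟩, haf, hjf⟩

end Covers

theorem sum_insert_le_add_sum {ι M : Type*} [DecidableEq ι] [AddCommMonoid M] [Preorder M]
    [CanonicallyOrderedAdd M] (f : ι → M) (i : ι) (s : Finset ι) :
    ∑ j ∈ insert i s, f j ≤ f i + ∑ j ∈ s, f j := by
  by_cases hi : i ∈ s
  · rw [Finset.insert_eq_of_mem hi]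
    exact le_add_self
  · rw [Finset.sum_insert hi]

theorem add_sInf_eq_sInf_image {M : Type*} [AddCommMonoid M] [CompleteLinearOrder M]
    [CanonicallyOrderedAdd M] [TopologicalSpace M] [OrderTopology M] [SeparatelyContinuousAdd M]
    (x : M) (s : Set M) : x + sInf s = sInf ((x + ·) '' s) := by
  have := CanonicallyOrderedAdd.toIsOrderedAddMonoid (α := M)
  exact Monotone.map_sInf_of_continuousAt (continuous_const_add x).continuousAt
    (fun _ _ h => add_le_add_right h x) (top_le_iff.1 le_add_self)

section MinCoverWeight

variable {E M : Type*} [AddCommMonoid M] {a b : E → ℕ} {w : E → M} {e : E} {k m : ℕ}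

theorem minCoverWeight_le_sum [CompleteSemilatticeInf M] {F : Finset E} (hF : CoversUpTo a b F k) :
    minCoverWeight a b w k ≤ ∑ e ∈ F, w e :=
  sInf_le ⟨F, hF, rfl⟩

theorem minCoverWeight_zero [CompleteSemilatticeInf M] [CanonicallyOrderedAdd M] :
    minCoverWeight a b w 0 = 0 :=
  le_antisymm (minCoverWeight_le_sum (F := ∅) coversUpTo_zero) zero_le

theorem add_minCoverWeight_le_sum [CompleteSemilatticeInf M] [CanonicallyOrderedAdd M]
    {F : Finset E} (hF : CoversUpTo a b F k) (heF : e ∈ F) (hmk : m ≤ k) (hme : m < a e) :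
    w e + minCoverWeight a b w m ≤ ∑ f ∈ F, w f := by
  classical
  have := CanonicallyOrderedAdd.toIsOrderedAddMonoid (α := M)
  rw [← Finset.add_sum_erase F w heF]
  gcongr
  exact minCoverWeight_le_sum (hF.erase hmk hme)

variable [CompleteLinearOrder M] [CanonicallyOrderedAdd M] [TopologicalSpace M] [OrderTopology M]
  [SeparatelyContinuousAdd M]

theorem minCoverWeight_le_add (hae : a e ≤ m + 1) (hke : k ≤ b e) :
    minCoverWeight a b w k ≤ w e + minCoverWeight a b w m := by
  classical
  refine (le_sInf ?_).trans_eq (add_sInf_eq_sInf_image (w e) _).symm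
  rintro _ ⟨_, ⟨F, hF, rfl⟩, rfl⟩
  exact (minCoverWeight_le_sum (hF.insert hae hke)).trans (sum_insert_le_add_sum w e F)

theorem minCoverWeight_eq_iInf (ha : ∀ e, 1 ≤ a e) (hk : 1 ≤ k) :
    minCoverWeight a b w k =
      ⨅ e : {e : E // a e ≤ k ∧ k ≤ b e}, (w e.1 + minCoverWeight a b w (a e.1 - 1)) := by
  apply le_antisymm
  · exact le_iInf fun e => minCoverWeight_le_add (Nat.le_add_of_sub_le le_rfl) e.2.2
  · apply le_sInf
    rintro _ ⟨F, hF, rfl⟩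
    obtain ⟨e, heF, hek⟩ := hF k hk le_rfl
    refine iInf_le_of_le ⟨e, hek⟩ (add_minCoverWeight_le_sum hF heF ?_ ?_)
    · exact (Nat.sub_le _ _).trans hek.1
    · exact Nat.sub_one_lt_of_lt (ha e)

theorem dp_value_eq_min_interval_cover_general (ℓ : ℕ) (a b : E → ℕ) (ha : ∀ e, 1 ≤ a e)
    (w : E → M) (W : ℕ → M) (hW0 : W 0 = 0)
    (hWrec : ∀ k : ℕ, 1 ≤ k → k ≤ ℓ →
      W k = ⨅ e : {e : E // a e ≤ k ∧ k ≤ b e}, (w e.1 + W (a e.1 - 1))) :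
    ∀ k : ℕ, k ≤ ℓ → W k = minCoverWeight a b w k := by
  intro k
  induction k using Nat.strong_induction_on with
  | _ k ih =>
    intro hkℓ
    obtain rfl | hk := Nat.eq_zero_or_pos k
    · rw [hW0, minCoverWeight_zero]
    · rw [hWrec k hk hkℓ, minCoverWeight_eq_iInf ha hk]
      refine iInf_congr fun e => ?_
      have hlt : a e.1 - 1 < k := (Nat.sub_one_lt_of_lt (ha e.1)).trans_le e.2.1
      rw [ih _ hlt (hlt.le.trans hkℓ)]

end MinCoverWeight

/-- the dynamic-programming value `W k` defined by `W 0 = 0` and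
`W k = inf { w e + W (a e - 1) : e ∈ E, a e ≤ k ≤ b e }` (for `1 ≤ k ≤ ℓ`, with
`inf ∅ = ∞`) equals, for every `0 ≤ k ≤ ℓ`, the infimum of `∑_{e ∈ F} w e` over
all `F ⊆ E` whose intervals `[a e, b e]` cover `{1,…,k}`.  In particular `W ℓ`
is the minimum total weight of a subset of `E` covering `{1,…,ℓ}`. -/
theorem dp_value_eq_min_interval_cover {E : Type*} [Fintype E]
    (ℓ : ℕ) (hℓ : 1 ≤ ℓ) (a b : E → ℕ)
    (ha : ∀ e, 1 ≤ a e) (hab : ∀ e, a e ≤ b e) (hb : ∀ e, b e ≤ ℓ)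
    (w : E → ℝ≥0∞) (W : ℕ → ℝ≥0∞) (hW0 : W 0 = 0)
    (hWrec : ∀ k : ℕ, 1 ≤ k → k ≤ ℓ →
      W k = ⨅ e : {e : E // a e ≤ k ∧ k ≤ b e}, (w e.1 + W (a e.1 - 1))) :
    ∀ k : ℕ, k ≤ ℓ →
      W k = sInf {c : ℝ≥0∞ | ∃ F : Finset E,
        (∀ j : ℕ, 1 ≤ j → j ≤ k → ∃ e ∈ F, a e ≤ j ∧ j ≤ b e) ∧
        c = ∑ e ∈ F, w e} :=
  dp_value_eq_min_interval_cover_general ℓ a b ha w W hW0 hWrec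
end

section
/- Suppose the state digraph has a line condensation C_1,…,C_ℓ and there is a permutation σ of the state vertices such that x → σ(x) is a state edge for every state vertex x. Let P ∈ ℝ_{≥0}^{m×p}. Then min { P(K) : K ⊆ {1,…,m}×{1,…,p} satisfies conditions (a) and (b) } = min { P(K) : K ⊆ {1,…,m}×{1,…,p} such that for every k ∈ {1,…,ℓ} there exist (i,j) ∈ K and q ≤ k ≤ r with an input edge from u_i to a state in C_q and an output edge from a state in C_r to y_j }; that is, the optimal feedback-selection cost equals the minimum cost of a set of feedback edges whose associated intervals cover {1,…,ℓ}. -/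
/-!
The cycles of `σ` cover the states without any feedback, so condition (b) is free, and condition
(a) says exactly that every class is covered.

If the feedback edge `y_j → u_i` has its input entering `C_q` and its output leaving `C_r`, then
every state of a class between `C_q` and `C_r` lies on a closed walk through this edge, because
along the line each class reaches all later ones.

Conversely, suppose no feedback edge covers `C_k`. Then every vertex can be placed before, at or
beyond `C_k` so that no closed-loop edge goes backwards and only states are ever placed at `C_k`.
Such a placement is constant on strongly connected components, so no state of `C_k` shares its
component with an input.
-/

open Relation

section SameSCC

variable {α β : Type*} {E : α → α → Prop} {f : α → β} {v w : α}

theorem map_le_of_reflTransGen [Preorder β] (hf : ∀ v w, E v w → f v ≤ f w)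
    (h : ReflTransGen E v w) : f v ≤ f w := by
  induction h with
  | refl => exact le_rfl
  | tail _ hE ih => exact ih.trans (hf _ _ hE)

theorem map_eq_of_sameSCC [PartialOrder β] (hf : ∀ v w, E v w → f v ≤ f w)
    (h : sameSCC E v w) : f v = f w :=
  le_antisymm (map_le_of_reflTransGen hf h.1) (map_le_of_reflTransGen hf h.2)

end SameSCC

namespace IsLineCondensation

variable {n ℓ : ℕ} {A : Fin n → Fin n → Prop} {C : Fin n → Fin ℓ}

theorem class_le_of_edge_s8 (h : IsLineCondensation A ℓ C) {a c : Fin n} (hac : A a c) :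
    C a ≤ C c := by
  have := h.step a c hac
  omega

theorem reflTransGen_of_class_eq (h : IsLineCondensation A ℓ C) {a c : Fin n} (hac : C a = C c) :
    ReflTransGen A a c :=
  ReflTransGen.mono (fun _ _ hvw => hvw.1) a c (h.strong a c hac)

theorem reflTransGen_of_class_le (h : IsLineCondensation A ℓ C) {a c : Fin n} (hac : C a ≤ C c) :
    ReflTransGen A a c := by
  suffices ∀ k : ℕ, (C a : ℕ) ≤ k → ∀ c, (C c : ℕ) = k → ReflTransGen A a c from
    this (C c) hac c rfl
  intro k hk
  induction k, hk using Nat.le_induction with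
  | base => exact fun c hc => h.reflTransGen_of_class_eq (Fin.ext hc.symm)
  | succ k _ ih =>
    intro c hc
    obtain ⟨v, w, hvw, hv, hw⟩ := h.linked ⟨k, by omega⟩ (by dsimp only; omega)
    have hav : ReflTransGen A a v := ih v (congrArg Fin.val hv)
    have hwc : ReflTransGen A w c := h.reflTransGen_of_class_eq (Fin.ext (hw.trans hc.symm))
    exact (hav.tail hvw).trans hwc

end IsLineCondensation

section ClosedLoop

variable {n m p ℓ : ℕ} {A : Fin n → Fin n → Prop} {B : Fin m → Fin n → Prop}
  {Co : Fin n → Fin p → Prop} {C : Fin n → Fin ℓ} {K : Finset (Fin m × Fin p)}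

theorem reflTransGen_stX {a c : Fin n} (hac : ReflTransGen A a c) :
    ReflTransGen (closedEdge A B Co K) (stX a) (stX c) :=
  ReflTransGen.lift stX (fun _ _ hvw => hvw) a c hac

theorem sameSCC_stU_and_sameSCC_stY_of_mem {i : Fin m} {j : Fin p} (hK : (i, j) ∈ K) {s a t : Fin n}
    (hs : B i s) (ht : Co t j) (hsa : ReflTransGen A s a) (hat : ReflTransGen A a t) :
    sameSCC (closedEdge A B Co K) (stX a) (stU i) ∧
      sameSCC (closedEdge A B Co K) (stX a) (stY j) := by
  have hay : ReflTransGen (closedEdge A B Co K) (stX a) (stY j) :=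
    (reflTransGen_stX hat).tail ht
  have hyu : closedEdge A B Co K (stY j) (stU i) := hK
  have hus : closedEdge A B Co K (stU i) (stX s) := hs
  have hua : ReflTransGen (closedEdge A B Co K) (stU i) (stX a) :=
    (reflTransGen_stX hsa).head hus
  exact ⟨⟨hay.tail hyu, hua⟩, ⟨hay, hua.head hyu⟩⟩

theorem condA_of_coversSCC (h : IsLineCondensation A ℓ C) (hK : ∀ k, coversSCC B Co C K k) :
    condA A B Co K := by
  intro a
  obtain ⟨e, he, _, _, hsa, hat, ⟨s, hs, rfl⟩, ⟨t, ht, rfl⟩⟩ := hK (C a)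
  exact ⟨e, he, sameSCC_stU_and_sameSCC_stY_of_mem he hs ht
    (h.reflTransGen_of_class_le hsa) (h.reflTransGen_of_class_le hat)⟩

open Classical in
/-- The side of the class `C_k` on which a vertex lies: `-1` before, `0` at and `1` beyond `C_k`.
An input is beyond `C_k` if it feeds only later classes, and an output if it reads some class
from `C_k` on; otherwise they are before `C_k`. -/
noncomputable def classSide (B : Fin m → Fin n → Prop) (Co : Fin n → Fin p → Prop)
    (C : Fin n → Fin ℓ) (k : Fin ℓ) : SVert n m p → SignType
  | Sum.inl a => SignType.sign ((C a : ℤ) - k)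
  | Sum.inr (Sum.inl i) => if ∀ s, B i s → k < C s then 1 else -1
  | Sum.inr (Sum.inr j) => if ∃ t, Co t j ∧ k ≤ C t then 1 else -1

theorem classSide_stX_eq_zero (a : Fin n) : classSide B Co C (C a) (stX a) = 0 := by
  simp [classSide, stX]

theorem classSide_stU_ne_zero (k : Fin ℓ) (i : Fin m) : classSide B Co C k (stU i) ≠ 0 := by
  simp only [classSide, stU]
  split_ifs <;> decide

theorem classSide_le_of_edge (hC : ∀ a c, A a c → C a ≤ C c) {k : Fin ℓ}
    (hk : ¬ coversSCC B Co C K k) (v w : SVert n m p) (hvw : closedEdge A B Co K v w) :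
    classSide B Co C k v ≤ classSide B Co C k w := by
  rcases v with a | i | j <;> rcases w with c | i' | j' <;>
    simp only [closedEdge] at hvw <;> simp only [classSide]
  case inl.inl =>
    have := hC a c hvw
    exact SignType.sign.monotone (by omega)
  case inl.inr.inr =>
    split_ifs with hj
    · exact SignType.le_one _
    · have hak : C a < k := lt_of_not_ge fun hka => hj ⟨a, hvw, hka⟩
      exact (sign_neg (by omega)).le
  case inr.inl.inl =>
    split_ifs with hi
    · have hkc : k < C c := hi c hvw
      exact (sign_pos (by omega)).ge
    · exact SignType.neg_one_le _
  case inr.inr.inr.inl =>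
    split_ifs with hj hi
    · exact le_rfl
    · obtain ⟨t, ht, hkt⟩ := hj
      push Not at hi
      obtain ⟨s, hs, hsk⟩ := hi
      exact absurd ⟨(i', j), hvw, C s, C t, hsk, hkt, ⟨s, hs, rfl⟩, ⟨t, ht, rfl⟩⟩ hk
    · exact SignType.neg_one_le _
    · exact le_rfl

theorem coversSCC_of_sameSCC_stU (hC : ∀ a c, A a c → C a ≤ C c) {a : Fin n} {i : Fin m}
    (h : sameSCC (closedEdge A B Co K) (stX a) (stU i)) : coversSCC B Co C K (C a) := by
  by_contra hk
  have hside : classSide B Co C (C a) (stX a) = classSide B Co C (C a) (stU i) :=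
    map_eq_of_sameSCC (classSide_le_of_edge hC hk) h
  exact classSide_stU_ne_zero (C a) i (hside.symm.trans (classSide_stX_eq_zero a))

theorem condA_iff_forall_coversSCC (h : IsLineCondensation A ℓ C) :
    condA A B Co K ↔ ∀ k, coversSCC B Co C K k := by
  refine ⟨fun hK k => ?_, condA_of_coversSCC h⟩
  obtain ⟨a, rfl⟩ := h.nonempty k
  obtain ⟨_, _, hau, _⟩ := hK a
  exact coversSCC_of_sameSCC_stU (fun _ _ hac => h.class_le_of_edge_s8 hac) hau

theorem condB_of_perm (σ : Equiv.Perm (Fin n)) (hσ : ∀ a, A a (σ a)) : condB A B Co K := by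
  refine ⟨Set.range stX, Equiv.sumCongr σ (Equiv.refl _), Equiv.bijOn _ ?_, Set.mem_range_self, ?_⟩
  · rintro (a | v) <;> simp [stX]
  · rintro _ ⟨a, rfl⟩
    exact hσ a

theorem line_opt_cost_eq_interval_cover_cost_general {R : Type*} [InfSet R]
    (h : IsLineCondensation A ℓ C) (σ : Equiv.Perm (Fin n)) (hσ : ∀ a, A a (σ a))
    (cost : Finset (Fin m × Fin p) → R) :
    sInf {c : R | ∃ K, condA A B Co K ∧ condB A B Co K ∧ c = cost K}
      = sInf {c : R | ∃ K, (∀ k, coversSCC B Co C K k) ∧ c = cost K} := by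
  simp only [condA_iff_forall_coversSCC h, condB_of_perm σ hσ, true_and]

end ClosedLoop

/-- under a line condensation and a perfect matching of the state
bipartite graph (a permutation `σ` of the states with a state edge `x → σ x`
for every `x`), the optimal feedback-selection cost equals the minimum cost of
a set of feedback edges whose associated intervals cover all classes
`C_1,…,C_ℓ`. -/
theorem line_opt_cost_eq_interval_cover_cost {n m p ℓ : ℕ}
    (A : Fin n → Fin n → Prop) (B : Fin m → Fin n → Prop) (Co : Fin n → Fin p → Prop)
    (C : Fin n → Fin ℓ) (h : IsLineCondensation A ℓ C)
    (σ : Equiv.Perm (Fin n)) (hσ : ∀ a : Fin n, A a (σ a))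
    (P : Fin m → Fin p → NNReal) :
    sInf {c : NNReal | ∃ K : Finset (Fin m × Fin p),
        condA A B Co K ∧ condB A B Co K ∧ c = fcost P K}
      = sInf {c : NNReal | ∃ K : Finset (Fin m × Fin p),
          (∀ k : Fin ℓ, coversSCC B Co C K k) ∧ c = fcost P K} :=
  line_opt_cost_eq_interval_cover_cost_general h σ hσ (fcost P)
end

section
/- Let P ∈ ℝ_{≥0}^{m×p}. Suppose K_ab satisfies conditions (a) and (b); suppose K_a satisfies condition (a) with P(K_a) ≤ P(K) for every K satisfying condition (a); and suppose K_b satisfies condition (b) with P(K_b) ≤ P(K) for every K satisfying condition (b). Then the union K_a ∪ K_b satisfies both conditions (a) and (b), and P(K_a ∪ K_b) ≤ P(K_a) + P(K_b) ≤ 2·P(K_ab). In particular, K_a ∪ K_b is a 2-optimal solution of the minimum-cost feedback selection problem. -/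
/-!
Both conditions are upward closed in the feedback set: enlarging `K` only adds edges to the
closed-loop digraph, and these destroy neither reachability nor a family of disjoint cycles.
Hence `K_a ∪ K_b` satisfies both. A set satisfying both conditions is a competitor of `K_a` and
of `K_b`, so it costs at least as much as each of them, and nonnegative costs are subadditive
under union.
-/

theorem sameSCC_mono {α : Type*} : Monotone (sameSCC (α := α)) :=
  fun _ _ hEF _ _ ⟨hab, hba⟩ =>
    ⟨Relation.ReflTransGen.mono hEF _ _ hab, Relation.ReflTransGen.mono hEF _ _ hba⟩

section ClosedLoop

variable {n m p : ℕ} (A : Fin n → Fin n → Prop) (B : Fin m → Fin n → Prop)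
  (Co : Fin n → Fin p → Prop)

theorem closedEdge_mono : Monotone (closedEdge A B Co) := by
  rintro K L hKL (a | i | j) (c | k | l) hvw
  -- Only the feedback edges `y_j → u_k` depend on the feedback set.
  case inr.inr.inr.inl => exact hKL hvw
  all_goals exact hvw

theorem condA_mono : Monotone (condA A B Co) := by
  intro K L hKL hK a
  obtain ⟨e, he, hu, hy⟩ := hK a
  have hSCC := sameSCC_mono (closedEdge_mono A B Co hKL)
  exact ⟨e, hKL he, hSCC _ _ hu, hSCC _ _ hy⟩

theorem condB_mono : Monotone (condB A B Co) :=
  fun _ _ hKL ⟨S, f, hf, hS, hE⟩ =>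
    ⟨S, f, hf, hS, fun v hv => closedEdge_mono A B Co hKL v (f v) (hE v hv)⟩

end ClosedLoop

theorem sum_union_le_sum_add_sum {ι M : Type*} [DecidableEq ι] [AddCommMonoid M] [Preorder M]
    [AddLeftMono M] {w : ι → M} {s t : Finset ι} (hw : ∀ i ∈ s ∩ t, 0 ≤ w i) :
    ∑ i ∈ s ∪ t, w i ≤ ∑ i ∈ s, w i + ∑ i ∈ t, w i := by
  rw [← Finset.sum_union_inter]
  exact le_add_of_nonneg_right (Finset.sum_nonneg hw)

theorem union_two_optimal_general {ι M : Type*} [DecidableEq ι] [AddCommMonoid M] [Preorder M]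
    [AddLeftMono M] {p q : Finset ι → Prop} (hp : Monotone p) (hq : Monotone q)
    {w : ι → M} (hw : ∀ i, 0 ≤ w i) {Kab Ka Kb : Finset ι} (hab : p Kab ∧ q Kab)
    (ha : p Ka) (haOpt : ∀ K, p K → ∑ i ∈ Ka, w i ≤ ∑ i ∈ K, w i)
    (hb : q Kb) (hbOpt : ∀ K, q K → ∑ i ∈ Kb, w i ≤ ∑ i ∈ K, w i) :
    p (Ka ∪ Kb) ∧ q (Ka ∪ Kb) ∧
    ∑ i ∈ Ka ∪ Kb, w i ≤ ∑ i ∈ Ka, w i + ∑ i ∈ Kb, w i ∧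
    ∑ i ∈ Ka, w i + ∑ i ∈ Kb, w i ≤ 2 • ∑ i ∈ Kab, w i := by
  refine ⟨hp Finset.subset_union_left ha, hq Finset.subset_union_right hb,
    sum_union_le_sum_add_sum fun i _ => hw i, ?_⟩
  rw [two_nsmul]
  exact add_le_add (haOpt Kab hab.1) (hbOpt Kab hab.2)

/-- if `K_ab` satisfies conditions (a) and (b), `K_a` is a
minimum-cost feedback set satisfying condition (a), and `K_b` is a
minimum-cost feedback set satisfying condition (b), then `K_a ∪ K_b` satisfies
both conditions and is 2-optimal:
`P(K_a ∪ K_b) ≤ P(K_a) + P(K_b) ≤ 2 · P(K_ab)`. -/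
theorem union_two_optimal {n m p : ℕ}
    (A : Fin n → Fin n → Prop) (B : Fin m → Fin n → Prop) (Co : Fin n → Fin p → Prop)
    (P : Fin m → Fin p → NNReal)
    (Kab Ka Kb : Finset (Fin m × Fin p))
    (hab : condA A B Co Kab ∧ condB A B Co Kab)
    (haA : condA A B Co Ka)
    (haOpt : ∀ K : Finset (Fin m × Fin p), condA A B Co K → fcost P Ka ≤ fcost P K)
    (hbB : condB A B Co Kb)
    (hbOpt : ∀ K : Finset (Fin m × Fin p), condB A B Co K → fcost P Kb ≤ fcost P K) :
    condA A B Co (Ka ∪ Kb) ∧ condB A B Co (Ka ∪ Kb) ∧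
    fcost P (Ka ∪ Kb) ≤ fcost P Ka + fcost P Kb ∧
    fcost P Ka + fcost P Kb ≤ 2 * fcost P Kab := by
  simpa only [fcost, two_nsmul, two_mul] using union_two_optimal_general (condA_mono A B Co)
    (condB_mono A B Co) (fun e => (zero_le : 0 ≤ P e.1 e.2)) hab haA haOpt hbB hbOpt
end

section
/- Let C be a set of state vertices that induces a strongly connected subgraph of the state digraph and has no state edge from a vertex of C to a state vertex outside C (a non-bottom-linked SCC). If some state vertex x ∈ C lies in the same strongly connected component of the closed-loop digraph as both endpoints of some feedback edge of K, then there exist (i',j') ∈ K and a state vertex x' ∈ C with an output edge x' → y_{j'}; that is, some output that is fed back senses a state of C. -/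
theorem exists_rel_mem_notMem_of_reflTransGen {α : Type*} {r : α → α → Prop} {s : Set α} {a b : α}
    (hab : Relation.ReflTransGen r a b) (ha : a ∈ s) (hb : b ∉ s) :
    ∃ v ∈ s, ∃ w ∉ s, r v w := by
  induction hab with
  | refl => exact absurd ha hb
  | @tail c d _ hcd ih =>
    by_cases hc : c ∈ s
    · exact ⟨c, hc, d, hb, hcd⟩
    · exact ih hc

section SensedNeighborhood

variable {n m p : ℕ}

/-- The vertices of a state set `C` together with the outputs sensing a state of `C`. When no state
edge leaves `C`, the only closed-loop edges leaving this set are feedback edges, so it serves as a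
cut separating `C` from the inputs. -/
def sensedNeighborhood (Co : Fin n → Fin p → Prop) (C : Set (Fin n)) : Set (SVert n m p) :=
  stX '' C ∪ stY '' {j | ∃ a ∈ C, Co a j}

theorem stX_mem_sensedNeighborhood {Co : Fin n → Fin p → Prop} {C : Set (Fin n)} {a : Fin n}
    (ha : a ∈ C) : (stX a : SVert n m p) ∈ sensedNeighborhood Co C :=
  Or.inl ⟨a, ha, rfl⟩

theorem stY_mem_sensedNeighborhood {Co : Fin n → Fin p → Prop} {C : Set (Fin n)} {a : Fin n}
    {j : Fin p} (ha : a ∈ C) (haj : Co a j) :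
    (stY j : SVert n m p) ∈ sensedNeighborhood Co C :=
  Or.inr ⟨j, ⟨a, ha, haj⟩, rfl⟩

theorem stU_notMem_sensedNeighborhood (Co : Fin n → Fin p → Prop) (C : Set (Fin n)) (i : Fin m) :
    stU i ∉ sensedNeighborhood Co C := by
  rintro (⟨a, -, h⟩ | ⟨j, -, h⟩)
  · exact Sum.inl_ne_inr h
  · exact Sum.inr_ne_inl (Sum.inr_injective h)

variable {A : Fin n → Fin n → Prop} {B : Fin m → Fin n → Prop} {Co : Fin n → Fin p → Prop}
  {K : Finset (Fin m × Fin p)} {C : Set (Fin n)}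

theorem exists_feedback_of_closedEdge_leaving_sensedNeighborhood {v w : SVert n m p}
    (hC : ∀ a ∈ C, ∀ c, A a c → c ∈ C) (hvw : closedEdge A B Co K v w)
    (hv : v ∈ sensedNeighborhood Co C) (hw : w ∉ sensedNeighborhood Co C) :
    ∃ e ∈ K, ∃ a ∈ C, Co a e.2 := by
  rcases hv with ⟨a, ha, rfl⟩ | ⟨j, hj, rfl⟩
  · rcases w with c | i | j
    · exact absurd (stX_mem_sensedNeighborhood (hC a ha c hvw)) hw
    · exact hvw.elim
    · exact absurd (stY_mem_sensedNeighborhood ha hvw) hw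
  · rcases w with c | i | j'
    · exact hvw.elim
    · exact ⟨(i, j), hvw, hj⟩
    · exact hvw.elim

end SensedNeighborhood

theorem non_bottom_scc_sensed_general {n m p : ℕ}
    (A : Fin n → Fin n → Prop) (B : Fin m → Fin n → Prop) (Co : Fin n → Fin p → Prop)
    (K : Finset (Fin m × Fin p)) (C : Set (Fin n))
    (hnb : ∀ a ∈ C, ∀ c : Fin n, A a c → c ∈ C)
    (hreach : ∃ a ∈ C, ∃ i, Relation.ReflTransGen (closedEdge A B Co K) (stX a) (stU i)) :
    ∃ e ∈ K, ∃ a ∈ C, Co a e.2 := by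
  obtain ⟨a, ha, i, hai⟩ := hreach
  obtain ⟨v, hv, w, hw, hvw⟩ := exists_rel_mem_notMem_of_reflTransGen hai
    (stX_mem_sensedNeighborhood ha) (stU_notMem_sensedNeighborhood Co C i)
  exact exists_feedback_of_closedEdge_leaving_sensedNeighborhood hnb hvw hv hw

/-- let `C` be a set of states inducing a strongly connected
subgraph of the state digraph with no state edge leaving `C` (a
non-bottom-linked SCC).  If some state of `C` lies in the same SCC of the
closed-loop digraph as both endpoints of some feedback edge of `K`, then some
output that is fed back (some `(i', j') ∈ K`) senses a state of `C`. -/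
theorem non_bottom_scc_sensed {n m p : ℕ}
    (A : Fin n → Fin n → Prop) (B : Fin m → Fin n → Prop) (Co : Fin n → Fin p → Prop)
    (K : Finset (Fin m × Fin p)) (C : Set (Fin n))
    (hstrong : ∀ a ∈ C, ∀ c ∈ C,
      Relation.ReflTransGen (fun v w => A v w ∧ v ∈ C ∧ w ∈ C) a c)
    (hnb : ∀ a ∈ C, ∀ c : Fin n, A a c → c ∈ C)
    (hx : ∃ a ∈ C, ∃ e ∈ K,
      sameSCC (closedEdge A B Co K) (stX a) (stU e.1) ∧
      sameSCC (closedEdge A B Co K) (stX a) (stY e.2)) :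
    ∃ e ∈ K, ∃ a ∈ C, Co a e.2 := by
  obtain ⟨a, ha, e, -, ⟨hae, -⟩, -⟩ := hx
  exact non_bottom_scc_sensed_general A B Co K C hnb ⟨a, ha, e.1, hae⟩
end

section
/- Suppose there is a single input u_1 (m = 1) and every state vertex is reachable in the state digraph from some state vertex actuated by u_1 (i.e., from some x with an input edge u_1 → x). Let C^b_1,…,C^b_β be the non-bottom-linked SCCs of the state digraph (the maximal strongly connected classes of state vertices with no outgoing state edge to a state outside the class). If T ⊆ {1,…,p} is such that for every k ∈ {1,…,β} there exist j ∈ T and a state x ∈ C^b_k with an output edge x → y_j, then the feedback set K = {(1,j) : j ∈ T} satisfies condition (a). -/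
/-! By finiteness every state `a` reaches a non-bottom-linked SCC and, inside it, a state sensed by
some `y_j` with `j ∈ T`. The feedback edge `y_j → u_1` and a path from `u_1` back to `a` close a
directed closed walk through `a`, `y_j` and `u_1`. -/

/-- `S` is a strongly connected component of the digraph `E`: the set of all vertices in the same
SCC as one of its members. -/
def IsSCC {α : Type*} (E : α → α → Prop) (S : Set α) : Prop :=
  ∃ a ∈ S, ∀ c, c ∈ S ↔ sameSCC E a c

/-- The SCC of `a` in the digraph `E` is non-bottom-linked. Encoded through reachability rather
than edges: no path from `a` leaves its SCC, so every vertex that `a` reaches also reaches `a`. -/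
def IsNonBottomLinked {α : Type*} (E : α → α → Prop) (a : α) : Prop :=
  ∀ c, Relation.ReflTransGen E a c → Relation.ReflTransGen E c a

section Digraph

variable {α : Type*} {E : α → α → Prop}

theorem IsSCC.reflTransGen {S : Set α} {a b : α} (hS : IsSCC E S) (ha : a ∈ S) (hb : b ∈ S) :
    Relation.ReflTransGen E a b := by
  obtain ⟨r, -, hr⟩ := hS
  exact ((hr a).1 ha).2.trans ((hr b).1 hb).1

theorem exists_reflTransGen_isNonBottomLinked [Finite α] (E : α → α → Prop) (a : α) :
    ∃ c, Relation.ReflTransGen E a c ∧ IsNonBottomLinked E c := by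
  let _ : Preorder α :=
    { le := Relation.ReflTransGen E
      le_refl := fun _ => .refl
      le_trans := fun _ _ _ => .trans }
  obtain ⟨c, hac, hc⟩ := Finite.exists_le_maximal (p := fun _ : α => True) (a := a) trivial
  exact ⟨c, hac, fun d hcd => hc.le_of_ge trivial hcd⟩

end Digraph

section ClosedLoop

variable {n m p : ℕ} {A : Fin n → Fin n → Prop} {B : Fin m → Fin n → Prop}
  {Co : Fin n → Fin p → Prop} {K : Finset (Fin m × Fin p)}

theorem reflTransGen_closedEdge_stX_stX {a b : Fin n} (hab : Relation.ReflTransGen A a b) :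
    Relation.ReflTransGen (closedEdge A B Co K) (stX a) (stX b) :=
  hab.lift stX fun _ _ h => h

theorem reflTransGen_closedEdge_stX_stY {a b : Fin n} {j : Fin p}
    (hab : Relation.ReflTransGen A a b) (hbj : Co b j) :
    Relation.ReflTransGen (closedEdge A B Co K) (stX a) (stY j) :=
  (reflTransGen_closedEdge_stX_stX hab).tail hbj

theorem reflTransGen_closedEdge_stU_stX {i : Fin m} {s a : Fin n}
    (his : B i s) (hsa : Relation.ReflTransGen A s a) :
    Relation.ReflTransGen (closedEdge A B Co K) (stU i) (stX a) :=
  .head (b := stX s) his (reflTransGen_closedEdge_stX_stX hsa)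

theorem condA_iff_exists_feedback :
    condA A B Co K ↔ ∀ a : Fin n, ∃ e ∈ K,
      Relation.ReflTransGen (closedEdge A B Co K) (stX a) (stY e.2) ∧
      Relation.ReflTransGen (closedEdge A B Co K) (stU e.1) (stX a) := by
  refine forall_congr' fun a => exists_congr fun e => and_congr_right fun he => ⟨?_, ?_⟩
  · rintro ⟨hau, hay⟩
    exact ⟨hay.1, hau.2⟩
  · rintro ⟨hay, hua⟩
    have hyu : Relation.ReflTransGen (closedEdge A B Co K) (stY e.2) (stU e.1) := .single he
    exact ⟨⟨hay.trans hyu, hua⟩, ⟨hay, hyu.trans hua⟩⟩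

theorem condA_of_forall_isNonBottomLinked (i : Fin m)
    (hreach : ∀ a : Fin n, ∃ s : Fin n, B i s ∧ Relation.ReflTransGen A s a)
    (hsense : ∀ c : Fin n, IsNonBottomLinked A c →
      ∃ j, (i, j) ∈ K ∧ ∃ b : Fin n, Relation.ReflTransGen A c b ∧ Co b j) :
    condA A B Co K := by
  refine condA_iff_exists_feedback.2 fun a => ?_
  obtain ⟨c, hac, hc⟩ := exists_reflTransGen_isNonBottomLinked A a
  obtain ⟨j, hij, b, hcb, hbj⟩ := hsense c hc
  obtain ⟨s, his, hsa⟩ := hreach a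
  exact ⟨(i, j), hij, reflTransGen_closedEdge_stX_stY (hac.trans hcb) hbj,
    reflTransGen_closedEdge_stU_stX his hsa⟩

theorem single_input_cover_implies_condA_general {ι : Sort*} (i : Fin m)
    (hreach : ∀ a : Fin n, ∃ s : Fin n, B i s ∧ Relation.ReflTransGen A s a)
    (Cb : ι → Set (Fin n)) (hscc : ∀ k, IsSCC A (Cb k))
    (hall : ∀ a : Fin n, IsNonBottomLinked A a → ∃ k, a ∈ Cb k)
    (T : Finset (Fin p)) (hT : ∀ k, ∃ j ∈ T, ∃ a ∈ Cb k, Co a j) :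
    condA A B Co (T.image fun j => (i, j)) := by
  refine condA_of_forall_isNonBottomLinked i hreach fun c hc => ?_
  obtain ⟨k, hck⟩ := hall c hc
  obtain ⟨j, hj, b, hbk, hbj⟩ := hT k
  exact ⟨j, Finset.mem_image_of_mem _ hj, b, (hscc k).reflTransGen hck hbk, hbj⟩

end ClosedLoop

/-- single-input case.  Suppose every state is reachable in the
state digraph from some state actuated by `u_1`, and `Cb 1, …, Cb β` are the
non-bottom-linked SCCs of the state digraph (each is an SCC with no outgoing
state edge, and every state whose SCC is non-bottom-linked lies in some
`Cb k`).  If for every `k` some output `y_j` with `j ∈ T` senses a state of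
`Cb k`, then the feedback set `{(1, j) : j ∈ T}` satisfies condition (a). -/
theorem single_input_cover_implies_condA {n p β : ℕ}
    (A : Fin n → Fin n → Prop) (B : Fin 1 → Fin n → Prop) (Co : Fin n → Fin p → Prop)
    (hreach : ∀ a : Fin n, ∃ s : Fin n, B 0 s ∧ Relation.ReflTransGen A s a)
    (Cb : Fin β → Set (Fin n))
    (hscc : ∀ k : Fin β, ∃ a ∈ Cb k, ∀ c : Fin n,
      c ∈ Cb k ↔ (Relation.ReflTransGen A a c ∧ Relation.ReflTransGen A c a))
    (hnb : ∀ k : Fin β, ∀ a ∈ Cb k, ∀ c : Fin n, A a c → c ∈ Cb k)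
    (hall : ∀ a : Fin n,
      (∀ c : Fin n, Relation.ReflTransGen A a c → Relation.ReflTransGen A c a) →
      ∃ k : Fin β, a ∈ Cb k)
    (T : Finset (Fin p))
    (hT : ∀ k : Fin β, ∃ j ∈ T, ∃ a ∈ Cb k, Co a j) :
    condA A B Co (T.image fun j => ((0 : Fin 1), j)) :=
  single_input_cover_implies_condA_general 0 hreach Cb hscc hall T hT
end
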